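/- arXiv:1808.02133 — 3 statements merged into one kernel-verified Lean document; each statement's English description precedes it below -/
import Mathlib

section
/- Fourier transform of the Poisson-type kernel: For every t > 0 and every ξ ∈ ℝ^d with ξ ≠ 0, the componentwise Fourier transform of ℙ_t is given by ℱ(ℙ_t)(ξ) = e^{−2π|ξ|t} ( I_{d+1} + (2π|ξ|t) · M(ξ) ), where M(ξ) is the complex (d+1)×(d+1) matrix whose upper-left d×d block is −(ξ ⊗ ξ)/|ξ|², whose last column and last row have first d entries equal to −i ξ/|ξ|, and whose (d+1, d+1) entry is 1. -/
open MeasureTheory Filter Set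
open scoped ENNReal NNReal Topology

noncomputable section

abbrev Ed (d : ℕ) : Type := EuclideanSpace ℝ (Fin d)

/-- The surface measure `ω_d` of the unit sphere in `ℝ^{d+1}`. -/
def sphereVol (d : ℕ) : ℝ :=
  ((d : ℝ) + 1) * (volume (Metric.ball (0 : EuclideanSpace ℝ (Fin (d+1))) 1)).toReal

/-- The Poisson kernel `p_t(x)` for the upper half-space `ℝ^d × (0,∞)`. -/
def poissonKernelEd (d : ℕ) (t : ℝ) (x : Ed d) : ℝ :=
  (2 / sphereVol d) * t / (‖x‖ ^ 2 + t ^ 2) ^ (((d : ℝ) + 1) / 2)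

/-- The (componentwise) Poisson integral `u(x,t) = (p_t ∗ f)(x)` of a vector field. -/
def poissonInt (d m : ℕ) (f : Ed d → Ed m) (x : Ed d) (t : ℝ) : Ed m :=
  ∫ y, poissonKernelEd d t y • f (x - y)

/-- The vector `(x, t) ∈ ℝ^{d+1}`. -/
def snocVec (d : ℕ) (x : Ed d) (t : ℝ) : Fin (d + 1) → ℝ := Fin.snoc (fun i => x i) t

/-- The entries `𝔭_t^{jk}(x)` of the Poisson-type matrix kernel `ℙ_t`. -/
def pEntry (d : ℕ) (t : ℝ) (j k : Fin (d + 1)) (x : Ed d) : ℝ :=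
  (2 * ((d : ℝ) + 1) / sphereVol d) * t * snocVec d x t j *
    snocVec d x t k / (‖x‖ ^ 2 + t ^ 2) ^ (((d : ℝ) + 3) / 2)

/-- The Fourier transform `ℱ(g)(ξ) = ∫_{ℝ^d} e^{−2πi ξ·x} g(x) dx` of a real-valued function. -/
def ftR (d : ℕ) (g : Ed d → ℝ) (ξ : Ed d) : ℂ :=
  ∫ x, Complex.exp (((-2 * Real.pi * (inner ℝ ξ x : ℝ) : ℝ) : ℂ) * Complex.I) * (g x : ℂ)

/-- The vector `w(ξ) = (ξ/|ξ|, i) ∈ ℂ^{d+1}`; the matrix `M(ξ)` of the statement is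
`M(ξ) = −w(ξ) ⊗ w(ξ)`. -/
def wvec (d : ℕ) (ξ : Ed d) : Fin (d + 1) → ℂ :=
  Fin.snoc (fun j => ((ξ j / ‖ξ‖ : ℝ) : ℂ)) Complex.I


def KK (t b u : ℝ) : ℝ := Real.exp (-(t^2*u) - b^2/u)

lemma KK_pos (t b u : ℝ) : 0 < KK t b u := Real.exp_pos _

lemma KK_le (t b : ℝ) {u : ℝ} (hu : 0 < u) : KK t b u ≤ Real.exp (-(t^2*u)) := by
  unfold KK
  apply Real.exp_le_exp.2
  have : 0 ≤ b^2/u := by positivity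
  linarith

lemma KK_le' (t b : ℝ) (hb : 0 < b) {u : ℝ} (hu : 0 < u) :
    KK t b u ≤ u / b^2 * Real.exp (-(t^2*u)) := by
  unfold KK
  rw [sub_eq_add_neg, Real.exp_add, mul_comm]
  apply mul_le_mul_of_nonneg_right _ (Real.exp_pos _).le
  have h := Real.add_one_le_exp (b^2/u)
  have h2 : 0 < b^2/u := by positivity
  rw [Real.exp_neg, show u / b^2 = (b^2/u)⁻¹ by rw [inv_div]]
  apply inv_anti₀ h2
  linarith

lemma KK_meas (t b : ℝ) : Measurable (KK t b) := by
  unfold KK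
  fun_prop

lemma base_int (t : ℝ) (ht : 0 < t) {s : ℝ} (hs : -1 < s) :
    IntegrableOn (fun u : ℝ => u ^ s * Real.exp (-(t^2*u))) (Ioi 0) := by
  have := integrableOn_rpow_mul_exp_neg_mul_rpow hs one_pos (b := t^2) (by positivity)
  simpa using this

lemma J1_int (t b : ℝ) (ht : 0 < t) : IntegrableOn (fun u => KK t b u / √u) (Ioi 0) := by
  refine Integrable.mono' (base_int t ht (s := -(1/2)) (by norm_num)) ?_ ?_
  · exact ((KK_meas t b).div (by fun_prop)).aestronglyMeasurable
  · filter_upwards [ae_restrict_mem measurableSet_Ioi] with u hu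
    have hu : 0 < u := hu
    have := KK_le t b hu
    have h2 := KK_pos t b u
    rw [Real.norm_eq_abs, abs_of_nonneg (by positivity), Real.rpow_neg hu.le, ← Real.sqrt_eq_rpow,
      div_eq_inv_mul]
    gcongr

lemma J0_int (t b : ℝ) (ht : 0 < t) : IntegrableOn (fun u => √u * KK t b u) (Ioi 0) := by
  refine Integrable.mono' (base_int t ht (s := (1/2)) (by norm_num)) ?_ ?_
  · exact (Measurable.mul (by fun_prop) (KK_meas t b)).aestronglyMeasurable
  · filter_upwards [ae_restrict_mem measurableSet_Ioi] with u hu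
    have hu : 0 < u := hu
    have := KK_le t b hu
    have h2 := KK_pos t b u
    rw [Real.norm_eq_abs, abs_of_nonneg (by positivity), ← Real.sqrt_eq_rpow]
    gcongr

lemma J3_int (t b : ℝ) (ht : 0 < t) (hb : 0 < b) :
    IntegrableOn (fun u => KK t b u / (u * √u)) (Ioi 0) := by
  refine Integrable.mono' ((base_int t ht (s := -(1/2)) (by norm_num)).const_mul (1/b^2)) ?_ ?_
  · exact ((KK_meas t b).div (by fun_prop)).aestronglyMeasurable
  · filter_upwards [ae_restrict_mem measurableSet_Ioi] with u hu
    have hu : 0 < u := hu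
    have := KK_le' t b hb hu
    have h2 := KK_pos t b u
    rw [Real.norm_eq_abs, abs_of_nonneg (by positivity), Real.rpow_neg hu.le, ← Real.sqrt_eq_rpow,
      div_le_iff₀ (by positivity)]
    refine this.trans (le_of_eq ?_)
    have : √u ≠ 0 := by positivity
    field_simp

def HH (v : ℝ) : ℝ := ∫ s in (0:ℝ)..v, Real.exp (-s^2)

lemma gauss_i : Integrable (fun s : ℝ => Real.exp (-s^2)) := by
  simpa using integrable_exp_neg_mul_sq (b := 1) one_pos

lemma HH_deriv (v : ℝ) : HasDerivAt HH (Real.exp (-v^2)) v := by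
  have hc : Continuous (fun s : ℝ => Real.exp (-s^2)) := by fun_prop
  exact intervalIntegral.integral_hasDerivAt_right (hc.intervalIntegrable _ _)
    (hc.stronglyMeasurableAtFilter _ _) hc.continuousAt

lemma HH_top : Tendsto HH atTop (𝓝 (√Real.pi / 2)) := by
  have := intervalIntegral_tendsto_integral_Ioi (0:ℝ) gauss_i.integrableOn tendsto_id
  have h := integral_gaussian_Ioi 1
  simp only [neg_mul, one_mul, div_one] at h
  rw [h] at this
  exact this

lemma HH_odd (v : ℝ) : HH (-v) = - HH v := by
  unfold HH
  have := intervalIntegral.integral_comp_neg (a := 0) (b := v) (fun s : ℝ => Real.exp (-s^2))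
  simp only [even_two, Even.neg_pow, neg_zero] at this
  rw [this, intervalIntegral.integral_symm]

lemma HH_bot : Tendsto HH atBot (𝓝 (-(√Real.pi / 2))) := by
  have : HH = fun v => - HH (-v) := by funext v; rw [HH_odd, neg_neg]
  rw [this]
  exact (HH_top.comp tendsto_neg_atBot_atTop).neg

lemma FTC {f f' : ℝ → ℝ} {a m : ℝ} (hd : ∀ x ∈ Ioi (0:ℝ), HasDerivAt f (f' x) x)
    (hi : IntegrableOn f' (Ioi 0)) (h0 : Tendsto f (𝓝[>] 0) (𝓝 a)) (h1 : Tendsto f atTop (𝓝 m)) :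
    ∫ x in Ioi (0:ℝ), f' x = m - a := by
  have := integral_Ioi_of_hasDerivAt_of_tendsto (f := Function.update f 0 a) (f' := f') (a := 0) (m := m)
    ?_ ?_ hi ?_
  · simpa using this
  · rw [continuousWithinAt_update_same]
    simpa using h0
  · intro x hx
    refine (hd x hx).congr_of_eventuallyEq ?_
    filter_upwards [eventually_ne_nhds (show x ≠ 0 from (ne_of_gt hx))] with y hy
    simp [Function.update_of_ne hy]
  · refine h1.congr' ?_
    filter_upwards [eventually_ne_atTop 0] with y hy
    simp [Function.update_of_ne hy]

lemma sq_top : Tendsto (fun u : ℝ => √u) atTop atTop := Real.tendsto_sqrt_atTop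
lemma isq_top : Tendsto (fun u : ℝ => (√u)⁻¹) atTop (𝓝 0) := tendsto_inv_atTop_zero.comp sq_top
lemma sq_zero : Tendsto (fun u : ℝ => √u) (𝓝[>] 0) (𝓝 0) := by
  have := Real.continuous_sqrt.tendsto 0
  rw [Real.sqrt_zero] at this
  exact this.mono_left nhdsWithin_le_nhds
lemma isq_zero : Tendsto (fun u : ℝ => (√u)⁻¹) (𝓝[>] 0) atTop := by
  apply tendsto_inv_nhdsGT_zero.comp
  rw [tendsto_nhdsWithin_iff]
  refine ⟨sq_zero, ?_⟩
  filter_upwards [self_mem_nhdsWithin] with u hu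
  exact Real.sqrt_pos.2 hu

lemma arg_deriv (t b : ℝ) {u : ℝ} (hu : 0 < u) :
    HasDerivAt (fun u : ℝ => t * √u + b * (√u)⁻¹) ((t / √u - b / (u * √u)) / 2) u := by
  have h := Real.hasDerivAt_sqrt hu.ne'
  have h3 : √u ≠ 0 := by positivity
  have := (h.const_mul t).add ((h.inv h3).const_mul b)
  refine this.congr_deriv ?_
  have h4 : √u ^2 = u := Real.sq_sqrt hu.le
  rw [h4]
  field_simp
  ring

lemma comp_deriv (t b : ℝ) {u : ℝ} (hu : 0 < u) :
    HasDerivAt (fun u : ℝ => 2 * Real.exp (2*t*b) * HH (t * √u + b * (√u)⁻¹))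
      (t * (KK t b u / √u) - b * (KK t b u / (u * √u))) u := by
  have := ((HH_deriv _).comp u (arg_deriv t b hu)).const_mul (2 * Real.exp (2*t*b))
  refine this.congr_deriv ?_
  have h3 : √u ≠ 0 := by positivity
  have h4 : √u ^2 = u := Real.sq_sqrt hu.le
  have : KK t b u = Real.exp (2*t*b) * Real.exp (-(t * √u + b * (√u)⁻¹)^2) := by
    rw [← Real.exp_add, KK]
    congr 1
    have : (t * √u + b * (√u)⁻¹)^2 = t^2 * √u^2 + 2 * t * b + b^2/ √u^2 := by
      field_simp
      ring
    rw [this, h4]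
    ring
  rw [this]
  field_simp

lemma L2 (t b : ℝ) (ht : 0 < t) (hb : 0 < b) :
    ∫ u in Ioi (0:ℝ), (t * (KK t b u / √u) - b * (KK t b u / (u * √u))) = 0 := by
  rw [FTC (fun x hx => comp_deriv t b hx) (((J1_int t b ht).const_mul t).sub ((J3_int t b ht hb).const_mul b))
    ((HH_top.comp ?_).const_mul _) ((HH_top.comp ?_).const_mul _), sub_self]
  · exact (sq_zero.const_mul t).add_atTop (isq_zero.const_mul_atTop hb)
  · exact (sq_top.const_mul_atTop ht).atTop_add (isq_top.const_mul b)

lemma KK_neg (t b u : ℝ) : KK t (-b) u = KK t b u := by simp [KK]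

lemma L1 (t b : ℝ) (ht : 0 < t) (hb : 0 < b) :
    ∫ u in Ioi (0:ℝ), (t * (KK t b u / √u) + b * (KK t b u / (u * √u)))
      = 2 * √Real.pi * Real.exp (-(2*t*b)) := by
  rw [FTC (f' := fun u => t * (KK t b u / √u) + b * (KK t b u / (u * √u))) (f := (fun u : ℝ => 2 * Real.exp (2*t*(-b)) * HH (t * √u + (-b) * (√u)⁻¹)))
    (fun x hx => ?_) (((J1_int t b ht).const_mul t).add ((J3_int t b ht hb).const_mul b))
    ((HH_bot.comp ?_).const_mul _) ((HH_top.comp ?_).const_mul _)]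
  · rw [mul_neg]; ring
  · exact (sq_zero.const_mul t).add_atBot (isq_zero.const_mul_atTop_of_neg (neg_neg_of_pos hb))
  · exact (sq_top.const_mul_atTop ht).atTop_add (isq_top.const_mul (-b))
  · refine (comp_deriv t (-b) hx).congr_deriv ?_
    rw [KK_neg]; ring

lemma L3 (t b : ℝ) (ht : 0 < t) (hb : 0 < b) :
    ∫ u in Ioi (0:ℝ), ((1/2) * (KK t b u / √u) - t^2 * (√u * KK t b u)
      + b^2 * (KK t b u / (u * √u))) = 0 := by
  have hs : Integrable (fun u => (1/2) * (KK t b u / √u) - t^2 * (√u * KK t b u))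
    (volume.restrict (Ioi 0)) := ((J1_int t b ht).const_mul _).sub ((J0_int t b ht).const_mul _)
  have hi : IntegrableOn (fun u => (1/2) * (KK t b u / √u) - t^2 * (√u * KK t b u)
      + b^2 * (KK t b u / (u * √u))) (Ioi 0) := hs.add ((J3_int t b ht hb).const_mul (b^2))
  rw [FTC (f' := fun u => (1/2) * (KK t b u / √u) - t^2 * (√u * KK t b u)
      + b^2 * (KK t b u / (u * √u))) (f := fun u => √u * KK t b u) (a := 0) (m := 0) (fun u hu => ?_)
    hi
    ?_ ?_, sub_self]
  rotate_left 2
  · have hu : 0 < u := hu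
    have h := Real.hasDerivAt_sqrt hu.ne'
    have h3 : √u ≠ 0 := by positivity
    have h4 : √u ^2 = u := Real.sq_sqrt hu.le
    have hK : HasDerivAt (KK t b) (KK t b u * (-t^2 + b^2/u^2)) u := by
      have h1 : HasDerivAt (fun u : ℝ => -(t^2*u) - b^2/u) (-t^2 + b^2/u^2) u := by
        have := (((hasDerivAt_id u).const_mul (t^2)).neg).sub ((hasDerivAt_inv hu.ne').const_mul (b^2))
        refine this.congr_deriv ?_
        field_simp
        ring
      exact h1.exp
    refine (h.mul hK).congr_deriv ?_
    field_simp
    rw [h4]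
    ring
  · refine squeeze_zero' (g := fun u => √u) ?_ ?_ sq_zero
    · exact Eventually.of_forall fun u => mul_nonneg (Real.sqrt_nonneg _) (KK_pos _ _ _).le
    · filter_upwards [self_mem_nhdsWithin] with u hu
      have hu : 0 < u := hu
      have h1 := KK_le t b hu
      have h2 : Real.exp (-(t^2*u)) ≤ 1 := Real.exp_le_one_iff.2 (by have : 0 < t^2*u := by positivity
                                                                     linarith)
      nlinarith [Real.sqrt_nonneg u]
  · refine squeeze_zero' (g := fun u => u^(1/2:ℝ) * Real.exp (-(t^2) * u)) ?_ ?_ ?_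
    · exact Eventually.of_forall fun u => mul_nonneg (Real.sqrt_nonneg _) (KK_pos _ _ _).le
    · filter_upwards [eventually_gt_atTop 0] with u hu
      have h1 := KK_le t b hu
      rw [← Real.sqrt_eq_rpow, neg_mul]
      gcongr
    · exact tendsto_rpow_mul_exp_neg_mul_atTop_nhds_zero _ _ (by positivity)

lemma I1 (t b : ℝ) (ht : 0 < t) (hb : 0 < b) :
    ∫ u in Ioi (0:ℝ), KK t b u / √u = √Real.pi / t * Real.exp (-(2*t*b)) := by
  have h1 := L1 t b ht hb
  have h2 := L2 t b ht hb
  rw [integral_add ((J1_int t b ht).const_mul t) ((J3_int t b ht hb).const_mul b),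
    integral_const_mul, integral_const_mul] at h1
  rw [integral_sub ((J1_int t b ht).const_mul t) ((J3_int t b ht hb).const_mul b),
    integral_const_mul, integral_const_mul] at h2
  rw [div_mul_eq_mul_div, eq_div_iff ht.ne']
  linarith

lemma I3 (t b : ℝ) (ht : 0 < t) (hb : 0 < b) :
    ∫ u in Ioi (0:ℝ), KK t b u / (u * √u) = √Real.pi / b * Real.exp (-(2*t*b)) := by
  have h1 := I1 t b ht hb
  have h2 := L2 t b ht hb
  rw [integral_sub ((J1_int t b ht).const_mul t) ((J3_int t b ht hb).const_mul b),
    integral_const_mul, integral_const_mul, h1] at h2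
  rw [div_mul_eq_mul_div, eq_div_iff hb.ne']
  have : t * (√Real.pi / t * Real.exp (-(2*t*b))) = √Real.pi * Real.exp (-(2*t*b)) := by
    field_simp
  linarith

lemma I0 (t b : ℝ) (ht : 0 < t) (hb : 0 < b) :
    ∫ u in Ioi (0:ℝ), √u * KK t b u = √Real.pi / (2 * t^3) * (1 + 2*t*b) * Real.exp (-(2*t*b)) := by
  have h3 := L3 t b ht hb
  have hs : Integrable (fun u => (1/2) * (KK t b u / √u) - t^2 * (√u * KK t b u))
    (volume.restrict (Ioi 0)) := ((J1_int t b ht).const_mul _).sub ((J0_int t b ht).const_mul _)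
  rw [integral_add hs ((J3_int t b ht hb).const_mul _),
    integral_sub ((J1_int t b ht).const_mul _) ((J0_int t b ht).const_mul _),
    integral_const_mul, integral_const_mul, integral_const_mul, I1 t b ht hb, I3 t b ht hb] at h3
  field_simp at h3 ⊢
  linarith
/-- character -/
def chr (d : ℕ) (ξ x : Ed d) : ℂ :=
  Complex.exp (((-2 * Real.pi * (inner ℝ ξ x : ℝ) : ℝ) : ℂ) * Complex.I)

lemma chr_norm (d : ℕ) (ξ x : Ed d) : ‖chr d ξ x‖ = 1 := Complex.norm_exp_ofReal_mul_I _

lemma chr_cont (d : ℕ) (ξ : Ed d) : Continuous (chr d ξ) := by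
  unfold chr; fun_prop

def gs (d : ℕ) (u : ℝ) (x : Ed d) : ℝ := Real.exp (-(u * ‖x‖^2))

lemma gs_cont (d : ℕ) (u : ℝ) : Continuous (gs d u) := by
  unfold gs; fun_prop

lemma gs_int (d : ℕ) {u : ℝ} (hu : 0 < u) : Integrable (gs d u) := by
  have := (GaussianFourier.integrable_cexp_neg_mul_sq_norm_add (b := (u:ℂ)) (by simpa using hu) 0 (0 : Ed d)).re
  refine this.congr (Eventually.of_forall fun x => ?_)
  simp only [gs, zero_mul, add_zero]
  rw [show (-(u:ℂ) * (‖x‖:ℂ)^2) = ((-(u*‖x‖^2) : ℝ) : ℂ) by push_cast; ring, ← Complex.ofReal_exp]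
  exact Complex.ofReal_re _

lemma gs_sq_int (d : ℕ) {u : ℝ} (hu : 0 < u) : Integrable (fun x => (1 + ‖x‖^2) * gs d u x) := by
  refine Integrable.mono' ((gs_int d (half_pos hu)).const_mul (1 + 2/u)) ?_ (Eventually.of_forall fun x => ?_)
  · exact Continuous.aestronglyMeasurable (Continuous.mul (by fun_prop) (gs_cont d u))
  · have h : gs d u x = gs d (u/2) x * gs d (u/2) x := by
      unfold gs; rw [← Real.exp_add]; congr 1; ring
    have hp : 0 < gs d (u/2) x := Real.exp_pos _
    have h1 : gs d (u/2) x ≤ 1 := by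
      have : 0 ≤ u/2*‖x‖^2 := by positivity
      exact Real.exp_le_one_iff.2 (by linarith)
    have h2 : ‖x‖^2 * gs d (u/2) x ≤ 2/u := by
      have := Real.add_one_le_exp (u/2*‖x‖^2)
      unfold gs
      rw [Real.exp_neg, ← div_eq_mul_inv, div_le_div_iff₀ (Real.exp_pos _) hu]
      nlinarith
    rw [Real.norm_eq_abs, abs_of_nonneg (by rw [h]; positivity), h]
    rw [← mul_assoc]
    gcongr
    nlinarith

lemma mom_int (d : ℕ) (ξ : Ed d) {u : ℝ} (hu : 0 < u) (p : Ed d → ℂ) (hp : Continuous p) (C : ℝ)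
    (hb : ∀ x, ‖p x‖ ≤ C * (1 + ‖x‖^2)) :
    Integrable (fun x => chr d ξ x * p x * (gs d u x : ℂ)) := by
  refine Integrable.mono' ((gs_sq_int d hu).const_mul C) ?_ (Eventually.of_forall fun x => ?_)
  · exact (((chr_cont d ξ).mul hp).mul (Complex.continuous_ofReal.comp (gs_cont d u))).aestronglyMeasurable
  · have : 0 < gs d u x := Real.exp_pos _
    rw [norm_mul, norm_mul, chr_norm, one_mul, Complex.norm_real, Real.norm_eq_abs, abs_of_pos this,
      ← mul_assoc]
    gcongr
    exact hb x

lemma chr_line (d : ℕ) (ξ x v : Ed d) :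
    HasLineDerivAt ℝ (chr d ξ) (((-2 * Real.pi * (inner ℝ ξ v : ℝ) : ℝ) : ℂ) * Complex.I * chr d ξ x) x v := by
  unfold HasLineDerivAt chr
  have h0 : HasDerivAt (fun s : ℝ => (-2 * Real.pi * (inner ℝ ξ (x + s • v) : ℝ) : ℝ))
      (-2 * Real.pi * (inner ℝ ξ v : ℝ)) 0 := by
    simp only [inner_add_right, inner_smul_right]
    have := (((hasDerivAt_id (0:ℝ)).mul_const (inner ℝ ξ v : ℝ)).const_add (inner ℝ ξ x : ℝ)).const_mul (-2 * Real.pi)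
    simpa using this
  have h1 := ((h0.ofReal_comp).mul_const Complex.I).cexp
  refine h1.congr_deriv ?_
  simp only [zero_smul, add_zero]
  ring

lemma gs_line (d : ℕ) (u : ℝ) (x v : Ed d) :
    HasLineDerivAt ℝ (fun x => (gs d u x : ℂ)) ((-(2 * u * inner ℝ x v) : ℝ) * (gs d u x : ℂ)) x v := by
  unfold HasLineDerivAt gs
  have h0 : HasDerivAt (fun s : ℝ => -(u * ‖x + s • v‖^2)) (-(2 * u * inner ℝ x v)) 0 := by
    have h2 : HasDerivAt (fun s : ℝ => x + s • v) v 0 := by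
      simpa using ((hasDerivAt_id (0:ℝ)).smul_const v).const_add x
    have := ((h2.norm_sq).const_mul u).neg
    refine this.congr_deriv ?_
    simp
    ring
  have h1 := (h0.exp).ofReal_comp
  refine h1.congr_deriv ?_
  simp only [zero_smul, add_zero]
  push_cast
  ring

lemma ibp (d : ℕ) (ξ v : Ed d) {u : ℝ} (hu : 0 < u) (p p' : Ed d → ℂ) (hp : Continuous p)
    (hp' : Continuous p') (C : ℝ)
    (hb : ∀ x, ‖p x‖ ≤ C * (1 + ‖x‖^2)) (hb' : ∀ x, ‖p' x‖ ≤ C * (1 + ‖x‖^2))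
    (hb2 : ∀ x, ‖p x * ((inner ℝ x v : ℝ) : ℂ)‖ ≤ C * (1 + ‖x‖^2))
    (hd : ∀ x, HasLineDerivAt ℝ p (p' x) x v) :
    2 * u * ∫ x, chr d ξ x * (p x * ((inner ℝ x v : ℝ) : ℂ)) * (gs d u x : ℂ) =
      (∫ x, chr d ξ x * p' x * (gs d u x : ℂ)) -
      2 * Real.pi * (inner ℝ ξ v : ℝ) * Complex.I * ∫ x, chr d ξ x * p x * (gs d u x : ℂ) := by
  have i1 := mom_int d ξ hu p hp C hb
  have i2 := mom_int d ξ hu p' hp' C hb'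
  have i3 := mom_int d ξ hu (fun x => p x * ((inner ℝ x v : ℝ) : ℂ)) (by fun_prop) C hb2
  have := integral_bilinear_hasLineDerivAt_right_eq_neg_left_of_integrable
    (μ := (volume : Measure (Ed d))) (f := fun x => chr d ξ x * p x)
    (f' := fun x => (((-2 * Real.pi * (inner ℝ ξ v : ℝ) : ℝ) : ℂ) * Complex.I * chr d ξ x) * p x
      + chr d ξ x * p' x) (g := fun x => (gs d u x : ℂ))
    (g' := fun x => ((-(2 * u * inner ℝ x v) : ℝ) * (gs d u x : ℂ))) (v := v)
    (B := ContinuousLinearMap.mul ℝ ℂ) ?_ ?_ ?_ ?_ ?_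
  · simp only [ContinuousLinearMap.mul_apply'] at this
    have e1 : ∀ x, chr d ξ x * p x * ((-(2 * u * inner ℝ x v) : ℝ) * (gs d u x : ℂ)) =
      (-(2 * u : ℂ)) * (chr d ξ x * (p x * ((inner ℝ x v : ℝ) : ℂ)) * (gs d u x : ℂ)) := by
      intro x; push_cast; ring
    have e2 : ∀ x, ((((-2 * Real.pi * (inner ℝ ξ v : ℝ) : ℝ) : ℂ) * Complex.I * chr d ξ x) * p x
      + chr d ξ x * p' x) * (gs d u x : ℂ) =
      (((-2 * Real.pi * (inner ℝ ξ v : ℝ) : ℝ) : ℂ) * Complex.I) * (chr d ξ x * p x * (gs d u x : ℂ))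
       + chr d ξ x * p' x * (gs d u x : ℂ) := by
      intro x; ring
    simp only [e1, e2] at this
    rw [integral_const_mul, integral_add (i1.const_mul _) i2, integral_const_mul] at this
    push_cast at this ⊢
    linear_combination -this
  · simp only [ContinuousLinearMap.mul_apply']
    refine ((i1.const_mul (((-2 * Real.pi * (inner ℝ ξ v : ℝ) : ℝ) : ℂ) * Complex.I)).add i2).congr
      (Eventually.of_forall fun x => ?_)
    simp only [Pi.add_apply]; ring
  · simp only [ContinuousLinearMap.mul_apply']
    refine (i3.const_mul (-(2 * u : ℂ))).congr (Eventually.of_forall fun x => ?_)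
    push_cast; ring
  · simpa using i1
  · intro x _
    exact HasDerivAt.congr_deriv (HasDerivAt.mul (chr_line d ξ x v) (hd x)) (by simp)
  · intro x _
    exact gs_line d u x v

lemma gs0 (d : ℕ) (ξ : Ed d) {u : ℝ} (hu : 0 < u) :
    ∫ x, chr d ξ x * 1 * (gs d u x : ℂ) =
      (((Real.pi / u) ^ ((d:ℝ)/2) * Real.exp (-((Real.pi*‖ξ‖)^2/u)) : ℝ) : ℂ) := by
  have := GaussianFourier.integral_cexp_neg_mul_sq_norm_add (b := (u:ℂ)) (by simpa using hu)
    (-(2 * Real.pi) * Complex.I) ξ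
  have hL : ∀ x : Ed d, chr d ξ x * 1 * (gs d u x : ℂ) = Complex.exp (-(u:ℂ) * ‖x‖^2 +
      (-(2 * Real.pi) * Complex.I) * (inner ℝ ξ x : ℝ)) := by
    intro x
    rw [chr, gs, Complex.ofReal_exp, mul_one, ← Complex.exp_add]
    congr 1
    push_cast
    ring
  simp only [hL]
  rw [this, Complex.ofReal_mul, Complex.ofReal_cpow (by positivity), Complex.ofReal_exp]
  have hu' : (u:ℂ) ≠ 0 := by exact_mod_cast hu.ne'
  congr 2
  · push_cast; rfl
  · simp
  · push_cast
    field_simp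
    rw [Complex.I_sq]
    ring

lemma coord_inner (d : ℕ) (x : Ed d) (j : Fin d) : inner ℝ x (EuclideanSpace.single j (1:ℝ)) = x j := by
  simp [EuclideanSpace.inner_single_right]

lemma coord_le (d : ℕ) (x : Ed d) (j : Fin d) : |x j| ≤ ‖x‖ := by
  simpa using PiLp.norm_apply_le x j

lemma gs1 (d : ℕ) (ξ : Ed d) {u : ℝ} (hu : 0 < u) (j : Fin d) :
    ∫ x, chr d ξ x * (x j : ℂ) * (gs d u x : ℂ) =
      - (Real.pi * ξ j / u * Complex.I) * 
      ∫ x, chr d ξ x * 1 * (gs d u x : ℂ) := by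
  have := ibp d ξ (EuclideanSpace.single j 1) hu (fun _ => 1) (fun _ => 0) (by fun_prop) (by fun_prop) 1
    (by intro x; simp) (by intro x; simp; positivity) ?_ ?_
  · simp only [coord_inner, one_mul, mul_zero, zero_mul, integral_zero] at this
    have hu' : (u:ℂ) ≠ 0 := by exact_mod_cast hu.ne'
    field_simp
    simp only [mul_one] at this ⊢
    linear_combination this/2
  · intro x
    rw [coord_inner]
    have := coord_le d x j
    simp
    nlinarith [sq_nonneg (‖x‖-1), norm_nonneg x]
  · intro x
    exact hasDerivAt_const _ _

lemma gs2 (d : ℕ) (ξ : Ed d) {u : ℝ} (hu : 0 < u) (j k : Fin d) :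
    ∫ x, chr d ξ x * ((x j : ℂ) * (x k : ℂ)) * (gs d u x : ℂ) =
      ((if j = k then 1 else 0) / (2 * u) - (Real.pi^2 * ξ j * ξ k / u^2)) * 
      ∫ x, chr d ξ x * 1 * (gs d u x : ℂ) := by
  have := ibp d ξ (EuclideanSpace.single k 1) hu (fun x => (x j : ℂ)) (fun _ => if j = k then 1 else 0)
    (by fun_prop) (by fun_prop) 1 ?_ ?_ ?_ ?_
  · simp only [coord_inner] at this
    rw [gs1 d ξ hu j] at this
    have hu' : (u:ℂ) ≠ 0 := by exact_mod_cast hu.ne'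
    have e : ∫ x, chr d ξ x * (if j = k then 1 else 0) * (gs d u x : ℂ) =
      (if j = k then 1 else 0) * ∫ x, chr d ξ x * 1 * (gs d u x : ℂ) := by
      split_ifs <;> simp
    rw [e] at this
    field_simp
    field_simp at this
    linear_combination this + 2 * Real.pi ^ 2 * (ξ j) * ξ k * (∫ x, chr d ξ x * (gs d u x : ℂ)) * Complex.I_sq
  · intro x
    have := coord_le d x j
    simp
    nlinarith [sq_nonneg (‖x‖-1), norm_nonneg x]
  · intro x
    split_ifs <;> simp <;> positivity
  · intro x
    rw [coord_inner]
    have := coord_le d x j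
    have := coord_le d x k
    simp
    nlinarith [mul_le_mul (coord_le d x j) (coord_le d x k) (abs_nonneg _) (norm_nonneg _)]
  · intro x
    unfold HasLineDerivAt
    have : HasDerivAt (fun s : ℝ => x j + s * (if j = k then 1 else 0)) (if j = k then 1 else 0) 0 := by
      simpa using ((hasDerivAt_id (0:ℝ)).mul_const (if j = k then (1:ℝ) else 0)).const_add (x j)
    have h := this.ofReal_comp
    have e : (fun s : ℝ => (((x + s • EuclideanSpace.single k (1:ℝ)) j : ℝ) : ℂ)) =
        fun s : ℝ => ((x j + s * (if j = k then 1 else 0) : ℝ) : ℂ) := by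
      funext s
      simp
    rw [e]
    refine h.congr_deriv ?_
    split_ifs <;> simp

lemma AA_pos (d : ℕ) (t : ℝ) (ht : 0 < t) (x : Ed d) : 0 < ‖x‖^2 + t^2 := by positivity

lemma gam_int {s : ℝ} (hs : 0 < s) {A : ℝ} (hA : 0 < A) :
    IntegrableOn (fun u : ℝ => u ^ (s - 1) * Real.exp (-(A * u))) (Ioi 0) := by
  have := integrableOn_rpow_mul_exp_neg_mul_rpow (s := s - 1) (by linarith) one_pos (b := A) hA
  simpa using this

lemma pk_int (d : ℕ) (t : ℝ) (ht : 0 < t) :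
    Integrable (fun x : Ed d => (1 / (‖x‖^2 + t^2)) ^ (((d:ℝ)+1)/2)) := by
  have h := integrable_rpow_neg_one_add_norm_sq (E := Ed d) (μ := volume) (r := (d:ℝ)+1) (by simp)
  set c : ℝ := min 1 (t^2) with hc
  have hc0 : 0 < c := lt_min one_pos (by positivity)
  refine Integrable.mono' (h.const_mul ((1/c) ^ (((d:ℝ)+1)/2))) ?_ (Eventually.of_forall fun x => ?_)
  · apply Measurable.aestronglyMeasurable
    fun_prop
  · have hA := AA_pos d t ht x
    have h1 : 0 < 1 + ‖x‖^2 := by positivity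
    rw [Real.norm_eq_abs, abs_of_nonneg (by positivity), neg_div, Real.rpow_neg h1.le,
      ← Real.inv_rpow h1.le, ← Real.mul_rpow (by positivity) (by positivity)]
    apply Real.rpow_le_rpow (by positivity) _ (by positivity)
    rw [one_div, one_div, ← mul_inv]
    apply inv_anti₀ (by positivity)
    have : c ≤ 1 := min_le_left _ _
    have : c ≤ t^2 := min_le_right _ _
    nlinarith [sq_nonneg ‖x‖]

lemma subord (d : ℕ) (t : ℝ) (ht : 0 < t) (ξ : Ed d) (P : Ed d → ℝ) (hP : Continuous P)
    (hPb : ∀ x, |P x| ≤ ‖x‖^2 + t^2) :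
    ∫ x, chr d ξ x * ((P x / (‖x‖^2 + t^2) ^ (((d:ℝ)+3)/2) : ℝ) : ℂ) =
      ((1 / Real.Gamma (((d:ℝ)+3)/2) : ℝ) : ℂ) *
      ∫ u in Ioi (0:ℝ), ((u ^ (((d:ℝ)+1)/2) * Real.exp (-(t^2*u)) : ℝ) : ℂ) *
        ∫ x, chr d ξ x * (P x : ℂ) * (gs d u x : ℂ) := by
  set s : ℝ := ((d:ℝ)+3)/2 with hs
  have hs0 : 0 < s := by positivity
  have hs1 : ((d:ℝ)+1)/2 = s - 1 := by rw [hs]; ring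
  have hΓ : 0 < Real.Gamma s := Real.Gamma_pos_of_pos hs0
  let F : Ed d → ℝ → ℂ := fun x u => chr d ξ x * (P x : ℂ) *
    ((u ^ (s-1) * Real.exp (-((‖x‖^2+t^2) * u)) : ℝ) : ℂ)
  have hFn : ∀ x, ∀ u ∈ Ioi (0:ℝ), ‖F x u‖ = |P x| * (u ^ (s-1) * Real.exp (-((‖x‖^2+t^2) * u))) := by
    intro x u hu
    have hu : 0 < u := hu
    simp only [F]
    rw [norm_mul, norm_mul, chr_norm, one_mul, Complex.norm_real, Complex.norm_real,
      Real.norm_eq_abs, Real.norm_eq_abs, abs_of_pos (a := u ^ (s-1) * _) (by positivity)]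
  have hFm : AEStronglyMeasurable (Function.uncurry F)
      ((volume : Measure (Ed d)).prod (volume.restrict (Ioi (0:ℝ)))) := by
    apply Measurable.aestronglyMeasurable
    simp only [F, Function.uncurry_def]
    have h1 := (chr_cont d ξ).measurable
    have h2 := hP.measurable
    fun_prop
  have hF : Integrable (Function.uncurry F) ((volume : Measure (Ed d)).prod (volume.restrict (Ioi (0:ℝ)))) := by
    rw [integrable_prod_iff hFm]
    constructor
    · refine Eventually.of_forall fun x => ?_
      simp only [F, Function.uncurry_apply_pair]
      exact ((gam_int hs0 (AA_pos d t ht x)).ofReal).const_mul _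
    · simp only [Function.uncurry_apply_pair]
      have e : ∀ x, ∫ u in Ioi (0:ℝ), ‖F x u‖ =
          |P x| * ((1 / (‖x‖^2+t^2)) ^ s * Real.Gamma s) := by
        intro x
        rw [setIntegral_congr_fun measurableSet_Ioi (hFn x), integral_const_mul,
          Real.integral_rpow_mul_exp_neg_mul_Ioi hs0 (AA_pos d t ht x)]
      simp only [e]
      refine Integrable.mono' ((pk_int d t ht).const_mul (Real.Gamma s)) ?_ (Eventually.of_forall fun x => ?_)
      · apply Measurable.aestronglyMeasurable
        have h2 := hP.measurable
        fun_prop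
      · have hA := AA_pos d t ht x
        rw [Real.norm_eq_abs, abs_of_nonneg (by positivity), hs1, Real.rpow_sub_one (by positivity)]
        have := hPb x
        calc |P x| * ((1 / (‖x‖^2+t^2)) ^ s * Real.Gamma s)
            ≤ (‖x‖^2+t^2) * ((1 / (‖x‖^2+t^2)) ^ s * Real.Gamma s) := by gcongr
          _ = _ := by field_simp
  have e1 : ∀ x, chr d ξ x * ((P x / (‖x‖^2 + t^2) ^ s : ℝ) : ℂ) =
      ((1 / Real.Gamma s : ℝ) : ℂ) * ∫ u in Ioi (0:ℝ), F x u := by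
    intro x
    have hA := AA_pos d t ht x
    simp only [F]
    rw [integral_const_mul, integral_complex_ofReal, Real.integral_rpow_mul_exp_neg_mul_Ioi hs0 hA,
      show P x / (‖x‖^2 + t^2) ^ s = P x * ((1 / Real.Gamma s) * ((1 / (‖x‖^2+t^2)) ^ s * Real.Gamma s)) by
        rw [Real.div_rpow zero_le_one hA.le, Real.one_rpow]
        field_simp]
    push_cast
    ring
  simp only [e1]
  rw [integral_const_mul, integral_integral_swap hF]
  congr 1
  refine setIntegral_congr_fun measurableSet_Ioi fun u hu => ?_
  rw [← integral_const_mul]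
  congr 1
  funext x
  simp only [F, gs, hs1]
  rw [show -((‖x‖^2+t^2) * u) = -(t^2*u) + -(u*‖x‖^2) by ring, Real.exp_add]
  push_cast
  ring

lemma vol_eq (d : ℕ) : sphereVol d = ((d:ℝ)+1) * (√Real.pi ^ (d+1) / Real.Gamma (((d:ℝ)+3)/2)) := by
  unfold sphereVol
  rw [EuclideanSpace.volume_ball]
  have : (((d+1 : ℕ):ℝ)/2 + 1) = ((d:ℝ)+3)/2 := by push_cast; ring
  have hG : 0 < Real.Gamma (((d:ℝ)+3)/2) := Real.Gamma_pos_of_pos (by positivity)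
  simp only [Fintype.card_fin, this, ENNReal.ofReal_one, one_pow, one_mul]
  rw [ENNReal.toReal_ofReal (by positivity)]

lemma snoc_cont (d : ℕ) (t : ℝ) (j : Fin (d+1)) : Continuous (fun x : Ed d => snocVec d x t j) := by
  induction j using Fin.lastCases with
  | last => simp only [snocVec, Fin.snoc_last]; fun_prop
  | cast j => simp only [snocVec, Fin.snoc_castSucc]; fun_prop

lemma snoc_le (d : ℕ) (t : ℝ) (j : Fin (d+1)) (x : Ed d) : snocVec d x t j ^ 2 ≤ ‖x‖^2 + t^2 := by
  induction j using Fin.lastCases with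
  | last => simp only [snocVec, Fin.snoc_last]; nlinarith [sq_nonneg ‖x‖]
  | cast j =>
    simp only [snocVec, Fin.snoc_castSucc]
    have := coord_le d x j
    rw [← sq_abs]
    nlinarith [sq_nonneg t, abs_nonneg (x j)]

lemma main_red (d : ℕ) (t : ℝ) (ht : 0 < t) (ξ : Ed d) (j k : Fin (d + 1)) (Q : ℝ → ℂ)
    (hQ : ∀ u, 0 < u → ∫ x, chr d ξ x * ((snocVec d x t j * snocVec d x t k : ℝ) : ℂ) * (gs d u x : ℂ)
      = Q u * ∫ x, chr d ξ x * 1 * (gs d u x : ℂ)) :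
    ftR d (pEntry d t j k) ξ = ((2 * t / √Real.pi : ℝ) : ℂ) *
      ∫ u in Ioi (0:ℝ), ((√u * KK t (Real.pi * ‖ξ‖) u : ℝ) : ℂ) * Q u := by
  have hsub := subord d t ht ξ (fun x => snocVec d x t j * snocVec d x t k)
    ((snoc_cont d t j).mul (snoc_cont d t k)) (by
      intro x
      rw [abs_le]
      constructor <;> nlinarith [snoc_le d t j x, snoc_le d t k x,
        sq_nonneg (snocVec d x t j - snocVec d x t k), sq_nonneg (snocVec d x t j + snocVec d x t k)])
  have hG : 0 < Real.Gamma (((d:ℝ)+3)/2) := Real.Gamma_pos_of_pos (by positivity)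
  have hpi := Real.pi_pos
  have e0 : ftR d (pEntry d t j k) ξ = ((2 * ((d:ℝ)+1) / sphereVol d * t : ℝ) : ℂ) *
      ∫ x, chr d ξ x * ((snocVec d x t j * snocVec d x t k / (‖x‖^2 + t^2) ^ (((d:ℝ)+3)/2) : ℝ) : ℂ) := by
    rw [← integral_const_mul, ftR]
    congr 1
    funext x
    rw [pEntry, chr]
    push_cast
    ring
  rw [e0, hsub]
  have e2 : ∫ u in Ioi (0:ℝ), ((u ^ (((d:ℝ)+1)/2) * Real.exp (-(t^2*u)) : ℝ) : ℂ) *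
        ∫ x, chr d ξ x * ((snocVec d x t j * snocVec d x t k : ℝ) : ℂ) * (gs d u x : ℂ) =
      ((√Real.pi ^ d : ℝ) : ℂ) * ∫ u in Ioi (0:ℝ), ((√u * KK t (Real.pi * ‖ξ‖) u : ℝ) : ℂ) * Q u := by
    rw [← integral_const_mul]
    refine setIntegral_congr_fun measurableSet_Ioi fun u hu => ?_
    have hu : 0 < u := hu
    rw [hQ u hu, gs0 d ξ hu, KK, sub_eq_add_neg, Real.exp_add, Real.div_rpow hpi.le hu.le,
      show ((d:ℝ)+1)/2 = 1/2 + (d:ℝ)/2 by ring, Real.rpow_add hu, ← Real.sqrt_eq_rpow]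
    have h1 : √Real.pi ^ d = Real.pi ^ ((d:ℝ)/2) := by
      rw [Real.sqrt_eq_rpow, ← Real.rpow_natCast, ← Real.rpow_mul hpi.le]
      congr 1; ring
    rw [h1]
    have h2 : u ^ ((d:ℝ)/2) ≠ 0 := by positivity
    have h3 : ((u ^ ((d:ℝ)/2) : ℝ) : ℂ) ≠ 0 := by exact_mod_cast h2
    push_cast
    field_simp
  rw [e2, ← mul_assoc, ← mul_assoc, ← Complex.ofReal_mul, ← Complex.ofReal_mul, vol_eq]
  congr 2
  have : √Real.pi ≠ 0 := by positivity
  field_simp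
  ring

lemma fin_last (d : ℕ) (t : ℝ) (ht : 0 < t) (ξ : Ed d) (hξ : ξ ≠ 0) (j : Fin d) :
    ftR d (pEntry d t j.castSucc (Fin.last d)) ξ =
      ((Real.exp (-(2 * Real.pi * ‖ξ‖ * t)) : ℝ) : ℂ) *
        (- ((2 * Real.pi * ‖ξ‖ * t : ℝ) : ℂ) * ((ξ j / ‖ξ‖ : ℝ) : ℂ) * Complex.I) := by
  have hn : 0 < ‖ξ‖ := norm_pos_iff.2 hξ
  have hb : 0 < Real.pi * ‖ξ‖ := mul_pos Real.pi_pos hn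
  rw [main_red d t ht ξ _ _ (fun u => t * (- (Real.pi * ξ j / u * Complex.I)))]
  · have e : ∫ u in Ioi (0:ℝ), ((√u * KK t (Real.pi * ‖ξ‖) u : ℝ) : ℂ) *
        (t * (- (Real.pi * ξ j / u * Complex.I))) =
        ∫ u in Ioi (0:ℝ), (- (t * Real.pi * ξ j * Complex.I)) * ((KK t (Real.pi * ‖ξ‖) u / √u : ℝ) : ℂ) := by
      refine setIntegral_congr_fun measurableSet_Ioi fun u hu => ?_
      have hu : 0 < u := hu
      simp only
      rw [show KK t (Real.pi * ‖ξ‖) u / √u = √u * KK t (Real.pi * ‖ξ‖) u / u by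
        have h3 : √u ≠ 0 := by positivity
        have h4 : √u ^2 = u := Real.sq_sqrt hu.le
        field_simp
        rw [h4]]
      push_cast
      ring
    rw [e, integral_const_mul, integral_complex_ofReal, I1 t _ ht hb,
      show -(2 * Real.pi * ‖ξ‖ * t) = -(2*t*(Real.pi * ‖ξ‖)) by ring]
    have h1 : ((√Real.pi : ℝ) : ℂ) ≠ 0 := by exact_mod_cast (Real.sqrt_pos.2 Real.pi_pos).ne'
    have h2 : ((t : ℝ) : ℂ) ≠ 0 := by exact_mod_cast ht.ne'
    have h3 : ((‖ξ‖ : ℝ) : ℂ) ≠ 0 := by exact_mod_cast hn.ne'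
    push_cast
    field_simp
  · intro u hu
    rw [mul_assoc, ← gs1 d ξ hu j, ← integral_const_mul]
    congr 1
    funext x
    simp only [snocVec, Fin.snoc_last, Fin.snoc_castSucc]
    push_cast
    ring

lemma fin_last_last (d : ℕ) (t : ℝ) (ht : 0 < t) (ξ : Ed d) (hξ : ξ ≠ 0) :
    ftR d (pEntry d t (Fin.last d) (Fin.last d)) ξ =
      ((Real.exp (-(2 * Real.pi * ‖ξ‖ * t)) : ℝ) : ℂ) * (1 + ((2 * Real.pi * ‖ξ‖ * t : ℝ) : ℂ)) := by
  have hn : 0 < ‖ξ‖ := norm_pos_iff.2 hξ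
  have hb : 0 < Real.pi * ‖ξ‖ := mul_pos Real.pi_pos hn
  rw [main_red d t ht ξ _ _ (fun u => t^2)]
  · rw [integral_mul_const, integral_complex_ofReal, I0 t _ ht hb,
      show -(2 * Real.pi * ‖ξ‖ * t) = -(2*t*(Real.pi * ‖ξ‖)) by ring]
    have h1 : ((√Real.pi : ℝ) : ℂ) ≠ 0 := by exact_mod_cast (Real.sqrt_pos.2 Real.pi_pos).ne'
    have h2 : ((t : ℝ) : ℂ) ≠ 0 := by exact_mod_cast ht.ne'
    push_cast
    field_simp
  · intro u hu
    rw [← integral_const_mul]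
    congr 1
    funext x
    simp only [snocVec, Fin.snoc_last]
    push_cast
    ring

lemma fin_cc (d : ℕ) (t : ℝ) (ht : 0 < t) (ξ : Ed d) (hξ : ξ ≠ 0) (j k : Fin d) :
    ftR d (pEntry d t j.castSucc k.castSucc) ξ =
      ((Real.exp (-(2 * Real.pi * ‖ξ‖ * t)) : ℝ) : ℂ) *
        ((if j = k then 1 else 0) -
          ((2 * Real.pi * ‖ξ‖ * t : ℝ) : ℂ) * ((ξ j / ‖ξ‖ : ℝ) : ℂ) * ((ξ k / ‖ξ‖ : ℝ) : ℂ)) := by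
  have hn : 0 < ‖ξ‖ := norm_pos_iff.2 hξ
  have hb : 0 < Real.pi * ‖ξ‖ := mul_pos Real.pi_pos hn
  rw [main_red d t ht ξ _ _ (fun u => ((if j = k then 1 else 0) / (2 * u) - (Real.pi^2 * ξ j * ξ k / u^2)))]
  · have e : ∫ u in Ioi (0:ℝ), ((√u * KK t (Real.pi * ‖ξ‖) u : ℝ) : ℂ) *
        ((if j = k then 1 else 0) / (2 * u) - (Real.pi^2 * ξ j * ξ k / u^2)) =
        ∫ u in Ioi (0:ℝ), (((if j = k then 1 else 0) / 2 : ℂ) * ((KK t (Real.pi * ‖ξ‖) u / √u : ℝ) : ℂ) -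
          (Real.pi^2 * ξ j * ξ k) * ((KK t (Real.pi * ‖ξ‖) u / (u * √u) : ℝ) : ℂ)) := by
      refine setIntegral_congr_fun measurableSet_Ioi fun u hu => ?_
      have hu : 0 < u := hu
      have h3 : √u ≠ 0 := by positivity
      have h4 : √u ^2 = u := Real.sq_sqrt hu.le
      simp only
      rw [show KK t (Real.pi * ‖ξ‖) u / √u = √u * KK t (Real.pi * ‖ξ‖) u / u by
        field_simp
        rw [h4], show KK t (Real.pi * ‖ξ‖) u / (u * √u) = √u * KK t (Real.pi * ‖ξ‖) u / u^2 by
        field_simp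
        rw [h4]]
      have h2 : ((u : ℝ) : ℂ) ≠ 0 := by exact_mod_cast hu.ne'
      push_cast
      field_simp
    rw [e, integral_sub (((J1_int t _ ht).ofReal).const_mul _) (((J3_int t _ ht hb).ofReal).const_mul _),
      integral_const_mul, integral_const_mul, integral_complex_ofReal, integral_complex_ofReal, I1 t _ ht hb,
      I3 t _ ht hb, show -(2 * Real.pi * ‖ξ‖ * t) = -(2*t*(Real.pi * ‖ξ‖)) by ring]
    have h0 : ((Real.pi : ℝ) : ℂ) ≠ 0 := by exact_mod_cast Real.pi_pos.ne'
    have h1 : ((√Real.pi : ℝ) : ℂ) ≠ 0 := by exact_mod_cast (Real.sqrt_pos.2 Real.pi_pos).ne'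
    have h2 : ((t : ℝ) : ℂ) ≠ 0 := by exact_mod_cast ht.ne'
    have h3 : ((‖ξ‖ : ℝ) : ℂ) ≠ 0 := by exact_mod_cast hn.ne'
    push_cast
    field_simp
  · intro u hu
    rw [← gs2 d ξ hu j k]
    congr 1
    funext x
    simp only [snocVec, Fin.snoc_castSucc]
    push_cast
    ring

/-- **Fourier transform of the Poisson-type kernel.** For every `t > 0` and `ξ ≠ 0`,
`ℱ(ℙ_t)(ξ) = e^{−2π|ξ|t} (I_{d+1} + (2π|ξ|t) M(ξ))` entrywise, where
`M(ξ)_{jk} = −w(ξ)_j w(ξ)_k` with `w(ξ) = (ξ/|ξ|, i)`; i.e. the upper-left `d×d` block of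
`M(ξ)` is `−(ξ ⊗ ξ)/|ξ|²`, the first `d` entries of its last row and column are `−iξ/|ξ|`,
and its `(d+1,d+1)` entry is `1`. -/
theorem pKernel_fourier_transform (d : ℕ) (t : ℝ) (ht : 0 < t)
    (ξ : Ed d) (hξ : ξ ≠ 0) (j k : Fin (d + 1)) :
    ftR d (pEntry d t j k) ξ =
      ((Real.exp (-(2 * Real.pi * ‖ξ‖ * t)) : ℝ) : ℂ) *
        ((if j = k then 1 else 0) -
          ((2 * Real.pi * ‖ξ‖ * t : ℝ) : ℂ) * wvec d ξ j * wvec d ξ k) := by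
  have hcomm : ∀ j k, pEntry d t j k = pEntry d t k j := by
    intro j k
    funext x
    unfold pEntry
    congr 1
    ring
  induction j using Fin.lastCases with
  | last =>
    induction k using Fin.lastCases with
    | last =>
      rw [fin_last_last d t ht ξ hξ]
      simp only [wvec, Fin.snoc_last, if_true]
      linear_combination ((Real.exp (-(2 * Real.pi * ‖ξ‖ * t)) : ℝ) : ℂ) *
        ((2 * Real.pi * ‖ξ‖ * t : ℝ) : ℂ) * Complex.I_sq
    | cast k =>
      rw [hcomm, fin_last d t ht ξ hξ, if_neg (Fin.castSucc_lt_last k).ne']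
      simp only [wvec, Fin.snoc_last, Fin.snoc_castSucc]
      ring
  | cast j =>
    induction k using Fin.lastCases with
    | last =>
      rw [fin_last d t ht ξ hξ, if_neg (Fin.castSucc_lt_last j).ne]
      simp only [wvec, Fin.snoc_last, Fin.snoc_castSucc]
      ring
    | cast k =>
      rw [fin_cc d t ht ξ hξ]
      simp only [wvec, Fin.snoc_castSucc, Fin.castSucc_inj]
end
end

section
/- Fractional Poincaré–Korn inequality: Let s ∈ (0,1), p ∈ (1,∞), and let B ⊂ ℝ^d be a ball. Then there exists a constant C = C(p,s,d,B) > 0 such that for every vector field f ∈ L^p(ℝ^d; ℝ^d) with [f]_{W^{s,p}(ℝ^d)} < ∞ and support contained in B, ‖f‖_{L^p(ℝ^d)}^p ≤ C ∫_{ℝ^d} ∫_{ℝ^d} |((f(x) − f(y)) · (x − y)/|x − y|)|^p / |x − y|^{d+sp} dx dy. -/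
open MeasureTheory Filter Set
open scoped ENNReal NNReal Topology

noncomputable section

/-- The `p`-th power of the projected Gagliardo seminorm `[f]_{𝒳^s_p(Ω)}^p`. -/
def projGagP (d : ℕ) (s p : ℝ) (Ω : Set (Ed d)) (f : Ed d → Ed d) : ℝ≥0∞ :=
  ∫⁻ x in Ω, ∫⁻ y in Ω,
    ENNReal.ofReal ((|(inner ℝ (f y - f x) (y - x) : ℝ)| / ‖y - x‖) ^ p /
      ‖y - x‖ ^ ((d : ℝ) + s * p))

/-- The projected Gagliardo seminorm `[f]_{𝒳^s_p(Ω)}`. -/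
def projSem (d : ℕ) (s p : ℝ) (Ω : Set (Ed d)) (f : Ed d → Ed d) : ℝ≥0∞ :=
  projGagP d s p Ω f ^ (1 / p)

/-- The `p`-th power of the Gagliardo seminorm `[f]_{W^{s,p}(Ω)}^p`. -/
def gagP (d : ℕ) (s p : ℝ) (Ω : Set (Ed d)) (f : Ed d → Ed d) : ℝ≥0∞ :=
  ∫⁻ x in Ω, ∫⁻ y in Ω,
    ENNReal.ofReal (‖f y - f x‖ ^ p / ‖y - x‖ ^ ((d : ℝ) + s * p))

/-- The Gagliardo seminorm `[f]_{W^{s,p}(Ω)}`. -/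
def gagSem (d : ℕ) (s p : ℝ) (Ω : Set (Ed d)) (f : Ed d → Ed d) : ℝ≥0∞ :=
  gagP d s p Ω f ^ (1 / p)

/-- Pointwise lower bound: integrate over the ball `B(x + 3r f(x)/|f(x)|, r)`, where `f` vanishes. -/
lemma inner_lower_bound (d : ℕ) (s p : ℝ) (hs : s ∈ Set.Ioo (0 : ℝ) 1)
    (hp : 1 < p) (x₀ : Ed d) (r : ℝ) (hr : 0 < r) (f : Ed d → Ed d)
    (hf : Function.support f ⊆ Metric.ball x₀ r) (x : Ed d) :
    ENNReal.ofReal ((1 / 2) ^ p / (4 * r) ^ ((d : ℝ) + s * p)) *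
        volume (Metric.ball (0 : Ed d) r) * ‖f x‖ₑ ^ p ≤
      ∫⁻ y, ENNReal.ofReal ((|(inner ℝ (f y - f x) (y - x) : ℝ)| / ‖y - x‖) ^ p /
        ‖y - x‖ ^ ((d : ℝ) + s * p)) := by
  have hp0 : 0 < p := by linarith
  have he : 0 ≤ (d : ℝ) + s * p := by
    have := mul_pos hs.1 hp0
    positivity
  by_cases hv : f x = 0
  · simp [hv, hp0]
  have hn : 0 < ‖f x‖ := norm_pos_iff.mpr hv
  have hx : ‖x - x₀‖ < r := by
    have := hf (Function.mem_support.mpr hv)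
    rwa [mem_ball_iff_norm] at this
  set w : Ed d := (3 * r / ‖f x‖) • f x with hw
  have hwn : ‖w‖ = 3 * r := by
    rw [hw, norm_smul, Real.norm_of_nonneg (by positivity)]
    field_simp
  have key : ∀ y ∈ Metric.ball (x + w) r,
      ENNReal.ofReal ((1 / 2) ^ p / (4 * r) ^ ((d : ℝ) + s * p)) * ‖f x‖ₑ ^ p ≤
      ENNReal.ofReal ((|(inner ℝ (f y - f x) (y - x) : ℝ)| / ‖y - x‖) ^ p /
        ‖y - x‖ ^ ((d : ℝ) + s * p)) := by
    intro y hy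
    rw [mem_ball_iff_norm] at hy
    set u : Ed d := y - (x + w) with hu
    have hyx : y - x = w + u := by rw [hu]; abel
    have h1 : ‖y - x‖ ≤ 4 * r := by
      rw [hyx]
      have := norm_add_le w u
      linarith
    have h2 : 2 * r < ‖y - x‖ := by
      rw [hyx]
      have := norm_sub_le (w + u) u
      rw [add_sub_cancel_right] at this
      linarith
    have hy0 : f y = 0 := by
      by_contra h
      have h3 := hf (Function.mem_support.mpr h)
      rw [mem_ball_iff_norm] at h3
      have h4 := norm_sub_le (y - x₀) (x - x₀)
      rw [sub_sub_sub_cancel_right] at h4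
      linarith
    have hin : 2 * r * ‖f x‖ ≤ |(inner ℝ (f y - f x) (y - x) : ℝ)| := by
      rw [hy0, zero_sub, inner_neg_left, abs_neg, hyx, inner_add_right]
      have h5 : (inner ℝ (f x) w : ℝ) = 3 * r * ‖f x‖ := by
        rw [hw, inner_smul_right, real_inner_self_eq_norm_sq]
        field_simp
      have h6 := abs_real_inner_le_norm (f x) u
      have h7 : ‖f x‖ * ‖u‖ ≤ ‖f x‖ * r := by gcongr
      have h8 := neg_abs_le (inner ℝ (f x) u : ℝ)
      refine le_trans ?_ (le_abs_self _)
      rw [h5]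
      linarith
    have hpos : 0 < ‖y - x‖ := by linarith
    have hq : 1 / 2 * ‖f x‖ ≤ |(inner ℝ (f y - f x) (y - x) : ℝ)| / ‖y - x‖ := by
      rw [le_div_iff₀ hpos]
      nlinarith
    rw [← ofReal_norm, ENNReal.ofReal_rpow_of_nonneg hn.le hp0.le,
      ← ENNReal.ofReal_mul (by positivity)]
    apply ENNReal.ofReal_le_ofReal
    rw [div_mul_eq_mul_div, ← Real.mul_rpow (by norm_num) hn.le]
    have := Real.rpow_pos_of_pos hpos ((d : ℝ) + s * p)
    gcongr
  calc _ = ∫⁻ y in Metric.ball (x + w) r,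
        ENNReal.ofReal ((1 / 2) ^ p / (4 * r) ^ ((d : ℝ) + s * p)) * ‖f x‖ₑ ^ p := by
        rw [setLIntegral_const, Measure.addHaar_ball_center volume (x + w) r, mul_right_comm]
    _ ≤ _ := setLIntegral_mono' measurableSet_ball key
    _ ≤ _ := setLIntegral_le_lintegral _ _

/-- **Fractional Poincaré–Korn inequality.** Let `s ∈ (0,1)`, `p ∈ (1,∞)` and let
`B = B(x₀,r) ⊂ ℝ^d` be a ball. There is `C = C(p,s,d,B) > 0` such that every
`f ∈ W^{s,p}(ℝ^d;ℝ^d)` supported in `B` satisfies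
`‖f‖_{L^p(ℝ^d)}^p ≤ C [f]_{𝒳^s_p(ℝ^d)}^p`. -/
theorem fractional_poincare_korn (d : ℕ) (s p : ℝ) (hs : s ∈ Set.Ioo (0 : ℝ) 1)
    (hp : 1 < p) (x₀ : Ed d) (r : ℝ) (hr : 0 < r) :
    ∃ C : ℝ, 0 < C ∧
      ∀ f : Ed d → Ed d, MemLp f (ENNReal.ofReal p) volume →
        gagP d s p Set.univ f < ∞ →
        Function.support f ⊆ Metric.ball x₀ r →
        eLpNorm f (ENNReal.ofReal p) volume ^ p ≤
          ENNReal.ofReal C * projGagP d s p Set.univ f := by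
  have hp0 : 0 < p := by linarith
  set a : ℝ := (1 / 2) ^ p / (4 * r) ^ ((d : ℝ) + s * p) with ha
  have hapos : 0 < a := by positivity
  set b : ℝ≥0∞ := volume (Metric.ball (0 : Ed d) r) with hb
  have hb0 : b ≠ 0 := (Metric.measure_ball_pos volume _ hr).ne'
  have hbt : b ≠ ∞ := measure_ball_lt_top.ne
  have hbr : 0 < b.toReal := ENNReal.toReal_pos hb0 hbt
  refine ⟨(a * b.toReal)⁻¹, by positivity, fun f _ _ hf => ?_⟩
  have hc : ENNReal.ofReal (a * b.toReal) = ENNReal.ofReal a * b := by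
    rw [ENNReal.ofReal_mul hapos.le, ENNReal.ofReal_toReal hbt]
  have hc0 : ENNReal.ofReal a * b ≠ 0 := mul_ne_zero (by simpa using hapos) hb0
  have hct : ENNReal.ofReal a * b ≠ ∞ := ENNReal.mul_ne_top ENNReal.ofReal_ne_top hbt
  rw [ENNReal.ofReal_inv_of_pos (by positivity), hc, mul_comm, ← div_eq_mul_inv,
    ENNReal.le_div_iff_mul_le (Or.inl hc0) (Or.inl hct), mul_comm,
    eLpNorm_eq_lintegral_rpow_enorm_toReal (by simpa using hp0) ENNReal.ofReal_ne_top,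
    ENNReal.toReal_ofReal hp0.le, ← ENNReal.rpow_mul, one_div_mul_cancel hp0.ne',
    ENNReal.rpow_one, ← lintegral_const_mul' _ _ hct]
  simp only [projGagP, Measure.restrict_univ]
  exact lintegral_mono fun x => inner_lower_bound d s p hs hp x₀ r hr f hf x
end
end

section
/- Fractional Sobolev embedding with the projected seminorm: Let s ∈ (0,1) and p ∈ (1,∞) be such that sp < d, and set p*_s = dp/(d − sp). Then there exists a constant C = C(d,p,s) > 0 such that for every measurable, compactly supported vector field f : ℝ^d → ℝ^d, ‖f‖_{L^{p*_s}(ℝ^d)}^p ≤ C ∫_{ℝ^d} ∫_{ℝ^d} |((f(x) − f(y)) · (x − y)/|x − y|)|^p / |x − y|^{d+sp} dx dy. -/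
open MeasureTheory Filter Set
open scoped ENNReal NNReal Topology

noncomputable section

theorem aux_D {d : ℕ} (u b w v : Ed d) (r : ℝ) (hr : 0 < r) (hu : u ≠ 0)
    (hv : v = ‖u‖⁻¹ • u) (hw : ‖w - (r / 2) • v‖ < r / 4) :
    0 < ‖w‖ ∧ ‖w‖ ≤ r ∧ ‖u‖ / 4 ≤ |(inner ℝ (b - u) w : ℝ)| / ‖w‖ + ‖b‖ := by
  have hun : 0 < ‖u‖ := norm_pos_iff.mpr hu
  have hv1 : ‖v‖ = 1 := by
    rw [hv, norm_smul, norm_inv, norm_norm, inv_mul_cancel₀ hun.ne']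
  have huv : (inner ℝ u v : ℝ) = ‖u‖ := by
    rw [hv, inner_smul_right, real_inner_self_eq_norm_sq]
    field_simp
  set z := w - (r / 2) • v with hz
  have hwz : w = (r / 2) • v + z := by rw [hz]; abel
  have h1 : ‖w‖ ≤ r := by
    have := norm_add_le ((r / 2) • v) z
    rw [← hwz, norm_smul, hv1, Real.norm_of_nonneg (by positivity)] at this
    linarith
  have h2 : ‖u‖ * (r / 4) ≤ (inner ℝ u w : ℝ) := by
    have h3 : (inner ℝ u w : ℝ) = r / 2 * ‖u‖ + inner ℝ u z := by
      rw [hwz, inner_add_right, inner_smul_right, huv]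
    have h4 := (abs_le.mp (abs_real_inner_le_norm u z)).1
    have h5 : ‖u‖ * ‖z‖ ≤ ‖u‖ * (r / 4) := by gcongr
    rw [h3]; nlinarith
  have h6 := real_inner_le_norm u w
  have hw0 : 0 < ‖w‖ := by
    by_contra h
    have h0 : ‖w‖ = 0 := le_antisymm (not_lt.mp h) (norm_nonneg _)
    rw [h0] at h6
    have : 0 < ‖u‖ * (r / 4) := by positivity
    linarith
  refine ⟨hw0, h1, ?_⟩
  have h7 : (inner ℝ (b - u) w : ℝ) = inner ℝ b w - inner ℝ u w := inner_sub_left _ _ _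
  have h8 := real_inner_le_norm b w
  have h9 := neg_le_abs (inner ℝ (b - u) w : ℝ)
  have h10 : ‖u‖ * (r / 4) ≤ |(inner ℝ (b - u) w : ℝ)| + ‖b‖ * ‖w‖ := by linarith
  have h11 : ‖u‖ / 4 * ‖w‖ ≤ ‖u‖ / 4 * r := by gcongr
  have h12 : |(inner ℝ (b - u) w : ℝ)| / ‖w‖ + ‖b‖ =
      (|(inner ℝ (b - u) w : ℝ)| + ‖b‖ * ‖w‖) / ‖w‖ := by field_simp
  rw [h12, le_div_iff₀ hw0]
  linarith

theorem aux_alg (p q a dd t m ω κ r C : ℝ) (ht : 0 < t) (hm : 0 < m) (hω : 0 < ω)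
    (hd : 0 < dd) (hκ : 0 < κ) (hqa : q * a = q - p)
    (hr : r = (κ * m / t ^ q) ^ (1 / dd))
    (hC : C = 2 / ω * 8 ^ p * κ ^ a) :
    t ^ q = C * m ^ a * ((t / 8) ^ p / r ^ (dd + a * dd) * (ω * r ^ dd / 2)) := by
  have hX : 0 < κ * m / t ^ q := by positivity
  have hr0 : 0 < r := by rw [hr]; positivity
  have h1 : r ^ (a * dd) = κ ^ a * m ^ a / t ^ (q - p) := by
    rw [hr, ← Real.rpow_mul hX.le, show 1 / dd * (a * dd) = a by field_simp,
      Real.div_rpow (by positivity) (by positivity), Real.mul_rpow hκ.le hm.le,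
      ← Real.rpow_mul ht.le, hqa]
  rw [Real.rpow_add hr0, h1, Real.div_rpow ht.le (by norm_num), hC,
    Real.rpow_sub ht]
  have : 0 < r ^ dd := by positivity
  have : 0 < t ^ p := by positivity
  have : 0 < t ^ q := by positivity
  have : 0 < (8:ℝ) ^ p := by positivity
  have : 0 < κ ^ a := by positivity
  have : 0 < m ^ a := by positivity
  field_simp

theorem aux_point (d : ℕ) (s p q a ω κ C : ℝ) (hd : 0 < d) (hp : 0 < p) (hq : 0 < q)
    (hqa : q * a = q - p) (ha : a * d = s * p) (ha0 : 0 ≤ a)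
    (hω : 0 < ω) (hωv : volume (Metric.ball (0 : Ed d) 1) = ENNReal.ofReal (ω * 4 ^ d))
    (hκ : κ = 2 * 8 ^ q / ω)
    (hC : C = 2 / ω * 8 ^ p * κ ^ a)
    (f : Ed d → Ed d) (hf : Measurable f) (T m : ℝ) (hm : 0 < m)
    (hM : ∫⁻ y, ENNReal.ofReal ((min ‖f y‖ T) ^ q) = ENNReal.ofReal m)
    (x : Ed d) (ht : 0 < min ‖f x‖ T) :
    ENNReal.ofReal ((min ‖f x‖ T) ^ q) ≤ ENNReal.ofReal (C * m ^ a) *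
      ∫⁻ y, ENNReal.ofReal ((|(inner ℝ (f y - f x) (y - x) : ℝ)| / ‖y - x‖) ^ p /
      ‖y - x‖ ^ ((d : ℝ) + s * p)) := by
  have hd' : (0 : ℝ) < d := by exact_mod_cast hd
  have hκ0 : 0 < κ := by rw [hκ]; positivity
  have hC0 : 0 < C := by rw [hC]; positivity
  set t := min ‖f x‖ T with htdef
  have htu : t ≤ ‖f x‖ := min_le_left _ _
  have htT : t ≤ T := min_le_right _ _
  have hu : f x ≠ 0 := norm_pos_iff.mp (ht.trans_le htu)
  obtain ⟨r, hr⟩ : ∃ r, r = (κ * m / t ^ q) ^ (1 / (d : ℝ)) := ⟨_, rfl⟩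
  have hr0 : 0 < r := by rw [hr]; positivity
  have hrd : r ^ (d : ℝ) = κ * m / t ^ q := by
    rw [hr, ← Real.rpow_mul (by positivity), one_div, inv_mul_cancel₀ hd'.ne', Real.rpow_one]
  have halg := aux_alg p q a d t m ω κ r C ht hm hω hd' hκ0 hqa hr hC
  rw [ha] at halg
  set v := ‖f x‖⁻¹ • f x with hv
  set A := Metric.ball (x + (r / 2) • v) (r / 4) with hA
  set B := {y | y ∈ A ∧ min ‖f y‖ T ≤ t / 8} with hB
  set E := {y : Ed d | ENNReal.ofReal ((t / 8) ^ q) ≤ ENNReal.ofReal ((min ‖f y‖ T) ^ q)} with hE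
  have : Nonempty (Fin d) := ⟨⟨0, hd⟩⟩
  have hgm : Measurable fun y => min ‖f y‖ T := hf.norm.min measurable_const
  have hBm : MeasurableSet B :=
    measurableSet_ball.inter (measurableSet_le hgm measurable_const)
  have hvA : volume A = ENNReal.ofReal (ω * r ^ (d : ℝ)) := by
    rw [hA, Measure.addHaar_ball _ _ (by positivity), hωv, ← ENNReal.ofReal_mul (by positivity)]
    congr 1
    rw [finrank_euclideanSpace_fin, Real.rpow_natCast, div_pow]
    field_simp
  have hvE : volume E ≤ ENNReal.ofReal (ω * r ^ (d : ℝ) / 2) := by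
    have h1 := meas_ge_le_lintegral_div (μ := volume)
      (f := fun y => ENNReal.ofReal ((min ‖f y‖ T) ^ q))
      (hgm.pow_const q).ennreal_ofReal.aemeasurable
      (ε := ENNReal.ofReal ((t / 8) ^ q)) (by
        rw [Ne, ENNReal.ofReal_eq_zero, not_le]; positivity) ENNReal.ofReal_ne_top
    refine h1.trans ?_
    rw [hM, ← ENNReal.ofReal_div_of_pos (by positivity)]
    apply le_of_eq
    congr 1
    rw [hrd, hκ, Real.div_rpow ht.le (by norm_num)]
    have : 0 < t ^ q := by positivity
    have : 0 < (8:ℝ) ^ q := by positivity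
    field_simp
  have hAB : A ⊆ B ∪ E := by
    intro y hy
    by_cases h : min ‖f y‖ T ≤ t / 8
    · exact Or.inl ⟨hy, h⟩
    · right
      apply ENNReal.ofReal_le_ofReal
      exact Real.rpow_le_rpow (by positivity) (not_le.mp h).le hq.le
  have hvB : ENNReal.ofReal (ω * r ^ (d : ℝ) / 2) ≤ volume B := by
    have h1 : volume A ≤ volume B + volume E := (measure_mono hAB).trans (measure_union_le _ _)
    have h2 : ENNReal.ofReal (ω * r ^ (d : ℝ) / 2) + ENNReal.ofReal (ω * r ^ (d : ℝ) / 2) ≤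
        volume B + ENNReal.ofReal (ω * r ^ (d : ℝ) / 2) := by
      rw [← ENNReal.ofReal_add (by positivity) (by positivity), add_halves, ← hvA]
      exact h1.trans (by gcongr)
    exact (ENNReal.add_le_add_iff_right ENNReal.ofReal_ne_top).mp h2
  have hsp : 0 ≤ s * p := by rw [← ha]; positivity
  have hpt : ∀ y ∈ B, ENNReal.ofReal ((t / 8) ^ p / r ^ ((d : ℝ) + s * p)) ≤
      ENNReal.ofReal ((|(inner ℝ (f y - f x) (y - x) : ℝ)| / ‖y - x‖) ^ p /
      ‖y - x‖ ^ ((d : ℝ) + s * p)) := by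
    rintro y ⟨hyA, hyt⟩
    have hw : ‖(y - x) - (r / 2) • v‖ < r / 4 := by
      rw [hA, mem_ball_iff_norm] at hyA
      rwa [sub_sub]
    obtain ⟨hw0, hwr, hD⟩ := aux_D (f x) (f y) (y - x) v r hr0 hu hv hw
    have hfy : ‖f y‖ ≤ t / 8 := by
      rcases min_le_iff.mp hyt with h | h
      · exact h
      · linarith
    apply ENNReal.ofReal_le_ofReal
    have hD' : t / 8 ≤ |(inner ℝ (f y - f x) (y - x) : ℝ)| / ‖y - x‖ := by linarith
    have h1 := Real.rpow_le_rpow (by positivity) hD' hp.le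
    have h2 := Real.rpow_le_rpow hw0.le hwr (by positivity : 0 ≤ (d : ℝ) + s * p)
    have h3 : 0 < ‖y - x‖ ^ ((d : ℝ) + s * p) := by positivity
    exact div_le_div₀ (by positivity) h1 h3 h2
  have hI : ENNReal.ofReal ((t / 8) ^ p / r ^ ((d : ℝ) + s * p) * (ω * r ^ (d : ℝ) / 2)) ≤
      ∫⁻ y, ENNReal.ofReal ((|(inner ℝ (f y - f x) (y - x) : ℝ)| / ‖y - x‖) ^ p /
      ‖y - x‖ ^ ((d : ℝ) + s * p)) := by
    rw [ENNReal.ofReal_mul (by positivity)]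
    calc _ ≤ ENNReal.ofReal ((t / 8) ^ p / r ^ ((d : ℝ) + s * p)) * volume B := by gcongr
      _ = ∫⁻ _ in B, ENNReal.ofReal ((t / 8) ^ p / r ^ ((d : ℝ) + s * p)) := by
        rw [setLIntegral_const]
      _ ≤ ∫⁻ y in B, ENNReal.ofReal ((|(inner ℝ (f y - f x) (y - x) : ℝ)| / ‖y - x‖) ^ p /
          ‖y - x‖ ^ ((d : ℝ) + s * p)) := setLIntegral_mono' hBm hpt
      _ ≤ _ := setLIntegral_le_lintegral _ _
  calc ENNReal.ofReal (t ^ q) = ENNReal.ofReal (C * m ^ a) *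
        ENNReal.ofReal ((t / 8) ^ p / r ^ ((d : ℝ) + s * p) * (ω * r ^ (d : ℝ) / 2)) := by
        rw [← ENNReal.ofReal_mul (by positivity), ← halg]
    _ ≤ _ := by gcongr

theorem aux_trunc (d : ℕ) (s p q a ω κ C : ℝ) (hd : 0 < d) (hp : 0 < p) (hq : 0 < q)
    (hqa : q * a = q - p) (ha : a * d = s * p) (ha0 : 0 ≤ a)
    (hω : 0 < ω) (hωv : volume (Metric.ball (0 : Ed d) 1) = ENNReal.ofReal (ω * 4 ^ d))
    (hκ : κ = 2 * 8 ^ q / ω)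
    (hC : C = 2 / ω * 8 ^ p * κ ^ a)
    (f : Ed d → Ed d) (hf : Measurable f) (hfc : HasCompactSupport f) (T : ℝ) (hT : 0 ≤ T) :
    ∫⁻ y, ENNReal.ofReal ((min ‖f y‖ T) ^ q) ≤
      (ENNReal.ofReal C * projGagP d s p Set.univ f) ^ (q / p) := by
  have hκ0 : 0 < κ := by rw [hκ]; positivity
  have hC0 : 0 < C := by rw [hC]; positivity
  have hfin : ∫⁻ y, ENNReal.ofReal ((min ‖f y‖ T) ^ q) ≠ ∞ := by
    have h1 : ∫⁻ y, ENNReal.ofReal ((min ‖f y‖ T) ^ q) ≤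
        ∫⁻ y, (tsupport f).indicator (fun _ => ENNReal.ofReal (T ^ q)) y := by
      apply lintegral_mono
      intro y
      by_cases hy : y ∈ tsupport f
      · rw [indicator_of_mem hy]
        exact ENNReal.ofReal_le_ofReal (Real.rpow_le_rpow (le_min (norm_nonneg _) hT)
          (min_le_right _ _) hq.le)
      · simp [image_eq_zero_of_notMem_tsupport hy, hT, Real.zero_rpow hq.ne']
    rw [lintegral_indicator (isClosed_tsupport f).measurableSet, setLIntegral_const] at h1
    exact ne_top_of_le_ne_top (ENNReal.mul_ne_top ENNReal.ofReal_ne_top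
      hfc.isCompact.measure_lt_top.ne) h1
  set M := ∫⁻ y, ENNReal.ofReal ((min ‖f y‖ T) ^ q) with hMdef
  by_cases hM0 : M = 0
  · rw [hM0]; exact zero_le
  have hm : 0 < M.toReal := ENNReal.toReal_pos hM0 hfin
  have hMm : M = ENNReal.ofReal M.toReal := (ENNReal.ofReal_toReal hfin).symm
  have hpt : ∀ x, ENNReal.ofReal ((min ‖f x‖ T) ^ q) ≤ ENNReal.ofReal (C * M.toReal ^ a) *
      ∫⁻ y, ENNReal.ofReal ((|(inner ℝ (f y - f x) (y - x) : ℝ)| / ‖y - x‖) ^ p /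
      ‖y - x‖ ^ ((d : ℝ) + s * p)) := by
    intro x
    by_cases ht : 0 < min ‖f x‖ T
    · exact aux_point d s p q a ω κ C hd hp hq hqa ha ha0 hω hωv hκ hC f hf T _ hm hMm x ht
    · have : min ‖f x‖ T = 0 := le_antisymm (not_lt.mp ht) (le_min (norm_nonneg _) hT)
      rw [this, Real.zero_rpow hq.ne', ENNReal.ofReal_zero]
      exact zero_le
  have hint : M ≤ ENNReal.ofReal (C * M.toReal ^ a) * projGagP d s p Set.univ f := by
    rw [projGagP]
    simp only [Measure.restrict_univ]
    rw [← lintegral_const_mul' _ _ ENNReal.ofReal_ne_top]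
    exact lintegral_mono hpt
  rw [ENNReal.ofReal_mul hC0.le, ← ENNReal.ofReal_rpow_of_pos hm, ← hMm] at hint
  have hpq : 1 - a = p / q := by field_simp; linarith
  have h2 : M ^ (p / q) ≤ ENNReal.ofReal C * projGagP d s p Set.univ f := by
    have h3 : M ^ a * M ^ (p / q) ≤ M ^ a * (ENNReal.ofReal C * projGagP d s p Set.univ f) := by
      rw [← ENNReal.rpow_add _ _ hM0 hfin, ← hpq, add_sub_cancel, ENNReal.rpow_one]
      calc M ≤ _ := hint
        _ = _ := by ring
    exact (ENNReal.mul_le_mul_iff_right (by simp [ENNReal.rpow_eq_zero_iff, hM0, hfin])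
      (ENNReal.rpow_ne_top_of_nonneg ha0 hfin)).mp h3
  calc M = (M ^ (p / q)) ^ (q / p) := by
        rw [← ENNReal.rpow_mul, show p / q * (q / p) = 1 by field_simp, ENNReal.rpow_one]
    _ ≤ _ := ENNReal.rpow_le_rpow h2 (by positivity)

theorem fractional_sobolev_embedding_proj (d : ℕ) (s p : ℝ) (hs : s ∈ Set.Ioo (0 : ℝ) 1)
    (hp : 1 < p) (hspd : s * p < d) :
    ∃ C : ℝ, 0 < C ∧
      ∀ f : Ed d → Ed d, Measurable f → HasCompactSupport f →
        eLpNorm f (ENNReal.ofReal ((d : ℝ) * p / ((d : ℝ) - s * p))) volume ^ p ≤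
          ENNReal.ofReal C * projGagP d s p Set.univ f := by
  have hs0 := hs.1
  have hp0 : 0 < p := by linarith
  have hd' : (0 : ℝ) < d := lt_trans (by positivity) hspd
  have hd : 0 < d := by exact_mod_cast hd'
  have hdsp : 0 < (d : ℝ) - s * p := by linarith
  obtain ⟨q, hqdef⟩ : ∃ q, q = (d : ℝ) * p / ((d : ℝ) - s * p) := ⟨_, rfl⟩
  have hq : 0 < q := by rw [hqdef]; positivity
  obtain ⟨a, hadef⟩ : ∃ a, a = s * p / d := ⟨_, rfl⟩
  have ha0 : 0 ≤ a := by rw [hadef]; positivity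
  have ha : a * d = s * p := by rw [hadef]; field_simp
  have hqa : q * a = q - p := by
    have h1 : q * ((d : ℝ) - s * p) = d * p := by rw [hqdef]; exact div_mul_cancel₀ _ hdsp.ne'
    have h2 : (d : ℝ) * (q * a) = d * (q - p) := by
      rw [show (d : ℝ) * (q * a) = q * (a * d) by ring, ha]; linarith
    exact mul_left_cancel₀ hd'.ne' h2
  obtain ⟨ω, hωdef⟩ : ∃ ω, ω = (volume (Metric.ball (0 : Ed d) 1)).toReal / 4 ^ d := ⟨_, rfl⟩
  have hb : 0 < (volume (Metric.ball (0 : Ed d) 1)).toReal :=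
    ENNReal.toReal_pos (Metric.measure_ball_pos _ _ one_pos).ne' measure_ball_lt_top.ne
  have hω : 0 < ω := by rw [hωdef]; positivity
  have hωv : volume (Metric.ball (0 : Ed d) 1) = ENNReal.ofReal (ω * 4 ^ d) := by
    rw [hωdef, div_mul_cancel₀ _ (by positivity), ENNReal.ofReal_toReal measure_ball_lt_top.ne]
  obtain ⟨κ, hκ⟩ : ∃ κ, κ = 2 * 8 ^ q / ω := ⟨_, rfl⟩
  obtain ⟨C, hC⟩ : ∃ C, C = 2 / ω * 8 ^ p * κ ^ a := ⟨_, rfl⟩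
  have hκ0 : 0 < κ := by rw [hκ]; positivity
  have hC0 : 0 < C := by rw [hC]; positivity
  refine ⟨C, hC0, fun f hf hfc => ?_⟩
  rw [← hqdef]
  have hbound : ∫⁻ y, ENNReal.ofReal (‖f y‖ ^ q) ≤
      (ENNReal.ofReal C * projGagP d s p Set.univ f) ^ (q / p) := by
    have hlim : Tendsto (fun n : ℕ => ∫⁻ y, ENNReal.ofReal ((min ‖f y‖ (n : ℝ)) ^ q)) atTop
        (𝓝 (∫⁻ y, ENNReal.ofReal (‖f y‖ ^ q))) := by
      apply lintegral_tendsto_of_tendsto_of_monotone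
      · intro n
        exact ((hf.norm.min measurable_const).pow_const q).ennreal_ofReal.aemeasurable
      · refine Eventually.of_forall fun y n k hnk => ?_
        apply ENNReal.ofReal_le_ofReal
        apply Real.rpow_le_rpow (by positivity) _ hq.le
        have : (n : ℝ) ≤ k := by exact_mod_cast hnk
        exact min_le_min_left _ this
      · refine Eventually.of_forall fun y => ?_
        apply tendsto_const_nhds.congr'
        obtain ⟨N, hN⟩ := exists_nat_ge ‖f y‖
        filter_upwards [eventually_ge_atTop N] with n hn
        have : (N : ℝ) ≤ n := by exact_mod_cast hn
        rw [min_eq_left (hN.trans this)]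
    exact le_of_tendsto' hlim fun n =>
      aux_trunc d s p q a ω κ C hd hp0 hq hqa ha ha0 hω hωv hκ hC f hf hfc n (by positivity)
  rw [eLpNorm_eq_lintegral_rpow_enorm_toReal (by simpa using hq) ENNReal.ofReal_ne_top,
    ENNReal.toReal_ofReal hq.le]
  have he : ∀ y, ‖f y‖ₑ ^ q = ENNReal.ofReal (‖f y‖ ^ q) := fun y => by
    rw [← ofReal_norm, ENNReal.ofReal_rpow_of_nonneg (norm_nonneg _) hq.le]
  simp only [he]
  rw [← ENNReal.rpow_mul]
  calc _ ≤ ((ENNReal.ofReal C * projGagP d s p Set.univ f) ^ (q / p)) ^ (1 / q * p) :=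
        ENNReal.rpow_le_rpow hbound (by positivity)
    _ = _ := by
      rw [← ENNReal.rpow_mul, show q / p * (1 / q * p) = 1 by field_simp, ENNReal.rpow_one]
end
end
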